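/- With the coordinate setup below, if the curvature of g vanishes identically on U (R^l_{ijk} = 0 for all indices), then the Ricci tensor of g̃ satisfies ρ̃_{ij} = (τ̃*/3)·g_{ij} + ((τ̃* + 2τ̃)/6)·g̃_{ij} at every point of U; in particular (U, g̃, Q) is almost Einstein, i.e. ρ̃ is a functional linear combination of g and g̃. -/

import Mathlib

open scoped BigOperators

/-- Points of ℝ³. -/
abbrev Pt := Fin 3 → ℝ

/-- Partial derivative `∂_i f` at `p`. -/
noncomputable def pd (i : Fin 3) (f : Pt → ℝ) (p : Pt) : ℝ :=
  fderiv ℝ f p (Pi.single i 1)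

/-- The circulant structure `Q` with `Q¹₂ = Q²₃ = Q³₁ = 1`. -/
def Qmat : Matrix (Fin 3) (Fin 3) ℝ := !![0,1,0; 0,0,1; 1,0,0]

/-- The metric `g_{ij}`: diagonal entries `A`, off-diagonal entries `B`. -/
def gm (A B : Pt → ℝ) (i j : Fin 3) (p : Pt) : ℝ :=
  if i = j then A p else B p

/-- The associated metric `g̃_{ij} = g_{is} Q^s_j + g_{sj} Q^s_i`. -/
def gt (A B : Pt → ℝ) (i j : Fin 3) (p : Pt) : ℝ :=
  ∑ s, (gm A B i s p * Qmat s j + gm A B s j p * Qmat s i)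

/-- Christoffel symbols `Γ^k_{ij}` of a metric `h` with (pointwise) inverse `hinv`. -/
noncomputable def Gamma (h hinv : Fin 3 → Fin 3 → Pt → ℝ) (k i j : Fin 3) (p : Pt) : ℝ :=
  (1/2) * ∑ s, hinv k s p * (pd i (h s j) p + pd j (h s i) p - pd s (h i j) p)

/-- Fundamental tensor `F_{kij} = ∂_k g̃_{ij} − Γ^s_{ki} g̃_{sj} − Γ^s_{kj} g̃_{si}`
of the metric `h` (with inverse `hinv`) acting on `ht` (= the associated metric). -/
noncomputable def Ften (h hinv ht : Fin 3 → Fin 3 → Pt → ℝ) (k i j : Fin 3) (p : Pt) : ℝ :=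
  pd k (ht i j) p - (∑ s, Gamma h hinv s k i p * ht s j p)
    - (∑ s, Gamma h hinv s k j p * ht s i p)

/-- Lee form `θ_k = g^{ij} F_{ijk}`. -/
noncomputable def theta (h hinv ht : Fin 3 → Fin 3 → Pt → ℝ) (k : Fin 3) (p : Pt) : ℝ :=
  ∑ i, ∑ j, hinv i j p * Ften h hinv ht i j k p

/-- Lee form `θ*_k = g^{ij} Q^s_j F_{isk}`. -/
noncomputable def thetaStar (h hinv ht : Fin 3 → Fin 3 → Pt → ℝ) (k : Fin 3) (p : Pt) : ℝ :=
  ∑ i, ∑ j, ∑ s, hinv i j p * Qmat s j * Ften h hinv ht i s k p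

/-- Curvature `R^l_{ijk} = ∂_i Γ^l_{jk} − ∂_j Γ^l_{ik} + Γ^s_{jk}Γ^l_{is} − Γ^s_{ik}Γ^l_{js}`
of the metric `h` with inverse `hinv`. -/
noncomputable def Riem (h hinv : Fin 3 → Fin 3 → Pt → ℝ) (l i j k : Fin 3) (p : Pt) : ℝ :=
  pd i (Gamma h hinv l j k) p - pd j (Gamma h hinv l i k) p
    + (∑ s, Gamma h hinv s j k p * Gamma h hinv l i s p)
    - (∑ s, Gamma h hinv s i k p * Gamma h hinv l j s p)

/-- Lowered curvature `R_{ijkl} = h_{ls} R^s_{ijk}`. -/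
noncomputable def RiemLow (h hinv : Fin 3 → Fin 3 → Pt → ℝ) (i j k l : Fin 3) (p : Pt) : ℝ :=
  ∑ s, h l s p * Riem h hinv s i j k p

/-- Ricci tensor `ρ_{jk} = h^{il} R_{ijkl}`. -/
noncomputable def Ricci (h hinv : Fin 3 → Fin 3 → Pt → ℝ) (j k : Fin 3) (p : Pt) : ℝ :=
  ∑ i, ∑ l, hinv i l p * RiemLow h hinv i j k l p

/-- Scalar curvature obtained by contracting the Ricci tensor of `(h, hinv)` with the
(inverse) metric `contr`: `contr^{jk} ρ_{jk}`. -/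
noncomputable def scal (h hinv contr : Fin 3 → Fin 3 → Pt → ℝ) (p : Pt) : ℝ :=
  ∑ j, ∑ k, contr j k p * Ricci h hinv j k p

/-!
Let `S` be the projection onto the diagonal of `ℝ³` and `P = 1 - S`. Then
`g = (A - B) P + (A + 2 B) S` and `g̃ = -(A - B) P + 2 (A + 2 B) S`, so that `g̃` arises from
`g = l P + n S` by rescaling `l` and `n` by nonzero constants `a` and `b`. Such a rescaling changes
`Γ^k_{ij}` by `u^k S_{ij} + v^k P_{ij}`, where `u = α l⁻¹ P ∇n` and `v = β n⁻¹ S ∇l` with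
`α = (1 - b / a) / 2` and `β = (1 - a / b) / 2`. This difference tensor is trace-free. In the change
of the Ricci tensor, its divergence and trace terms are combinations of `P` and `S`, and the
remaining components along `u ⊗ v + v ⊗ u` cancel because `(α + β) / 2 = α β`. Hence `ρ̃ - ρ` is a
combination of `P` and `S`, or equivalently of `g` and `g̃`. If `ρ` is one too, in particular if
`g` is flat, the two traces `τ̃` and `τ̃*` determine the coefficients of `ρ̃`.
-/

open Filter Topology Matrix

section PartialDerivatives

variable {f g : Pt → ℝ} {p : Pt}

lemma pd_congr (h : f =ᶠ[𝓝 p] g) (i : Fin 3) : pd i f p = pd i g p := by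
  rw [pd, pd, h.fderiv_eq]

lemma pd_add (hf : DifferentiableAt ℝ f p) (hg : DifferentiableAt ℝ g p) (i : Fin 3) :
    pd i (f + g) p = pd i f p + pd i g p := by
  simp [pd, fderiv_add hf hg]

lemma pd_const_smul (c : ℝ) (f : Pt → ℝ) (p : Pt) (i : Fin 3) :
    pd i (c • f) p = c * pd i f p := by
  simp [pd, fderiv_const_smul_field]

lemma pd_fun_sum {F : Fin 3 → Pt → ℝ} (hF : ∀ s, DifferentiableAt ℝ (F s) p) (i : Fin 3) :
    pd i (fun q => ∑ s, F s q) p = ∑ s, pd i (F s) p := by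
  simp [pd, fderiv_fun_sum fun s _ => hF s]

lemma differentiableAt_pd (hf : ContDiffAt ℝ 2 f p) (i : Fin 3) :
    DifferentiableAt ℝ (pd i f) p :=
  ((hf.fderiv_right (m := 1) le_rfl).differentiableAt one_ne_zero).clm_apply
    (differentiableAt_const _)

/-- The coordinate gradient `(∂_i f)_i`; no index is raised with a metric. -/
noncomputable def grad (f : Pt → ℝ) (p : Pt) : Fin 3 → ℝ := fun i => pd i f p

lemma grad_const_smul (c : ℝ) (f : Pt → ℝ) (p : Pt) : grad (c • f) p = c • grad f p :=
  funext fun i => pd_const_smul c f p i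

lemma differentiableAt_grad (hf : ContDiffAt ℝ 2 f p) : DifferentiableAt ℝ (grad f) p :=
  differentiableAt_pi.2 fun i => differentiableAt_pd hf i

end PartialDerivatives

section Curvature

/-- The coefficient matrix `(h_{ij}(p))` of a tensor field with two indices. -/
def tensorAt (h : Fin 3 → Fin 3 → Pt → ℝ) (p : Pt) : Matrix (Fin 3) (Fin 3) ℝ :=
  .of fun i j => h i j p

variable {h hinv h' hinv' : Fin 3 → Fin 3 → Pt → ℝ} {T : Fin 3 → Fin 3 → Fin 3 → Pt → ℝ} {p : Pt}

lemma tensorAt_mul_eq_one (hh : ∀ i j, ∑ s, h i s p * hinv s j p = if i = j then (1 : ℝ) else 0) :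
    tensorAt h p * tensorAt hinv p = 1 := by
  ext i j
  simp [tensorAt, mul_apply, one_apply, hh]

lemma Ricci_eq_sum_Riem (hh : tensorAt h p * tensorAt hinv p = 1) (j k : Fin 3) :
    Ricci h hinv j k p = ∑ i, Riem h hinv i i j k p := by
  have hinv_mul (i s : Fin 3) : ∑ l, hinv i l p * h l s p = if i = s then 1 else 0 := by
    simpa [tensorAt, mul_apply, one_apply] using congr($(mul_eq_one_comm.1 hh) i s)
  refine Finset.sum_congr rfl fun i _ => ?_
  calc ∑ l, hinv i l p * RiemLow h hinv i j k l p
      = ∑ s, (∑ l, hinv i l p * h l s p) * Riem h hinv s i j k p := by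
        simp only [RiemLow, Finset.mul_sum, Finset.sum_mul, mul_assoc]
        exact Finset.sum_comm
    _ = Riem h hinv i i j k p := by simp [hinv_mul]

lemma Riem_of_Gamma_eventuallyEq_add
    (hΓ : ∀ k i j, Gamma h' hinv' k i j =ᶠ[𝓝 p] Gamma h hinv k i j + T k i j)
    (dΓ : ∀ k i j, DifferentiableAt ℝ (Gamma h hinv k i j) p)
    (dT : ∀ k i j, DifferentiableAt ℝ (T k i j) p) (l i j k : Fin 3) :
    Riem h' hinv' l i j k p = Riem h hinv l i j k p + (pd i (T l j k) p - pd j (T l i k) p)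
      + ∑ s, (Gamma h hinv s j k p * T l i s p + T s j k p * Gamma h hinv l i s p
          + T s j k p * T l i s p)
      - ∑ s, (Gamma h hinv s i k p * T l j s p + T s i k p * Gamma h hinv l j s p
          + T s i k p * T l j s p) := by
  have hΓp (k i j : Fin 3) : Gamma h' hinv' k i j p = Gamma h hinv k i j p + T k i j p :=
    (hΓ k i j).self_of_nhds
  simp only [Riem, pd_congr (hΓ _ _ _), pd_add (dΓ _ _ _) (dT _ _ _), hΓp, add_mul, mul_add,
    Finset.sum_add_distrib]
  ring

lemma Ricci_of_Gamma_eventuallyEq_add_of_trace_eq_zero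
    (hh : tensorAt h p * tensorAt hinv p = 1) (hh' : tensorAt h' p * tensorAt hinv' p = 1)
    (hΓ : ∀ k i j, Gamma h' hinv' k i j =ᶠ[𝓝 p] Gamma h hinv k i j + T k i j)
    (dΓ : ∀ k i j, DifferentiableAt ℝ (Gamma h hinv k i j) p)
    (dT : ∀ k i j, DifferentiableAt ℝ (T k i j) p)
    (htr : ∀ k q, ∑ i, T i i k q = 0) (j k : Fin 3) :
    Ricci h' hinv' j k p = Ricci h hinv j k p + ∑ i, pd i (T i j k) p
      + ∑ s, T s j k p * ∑ i, Gamma h hinv i i s p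
      - ∑ i, ∑ s, (Gamma h hinv s i k p * T i j s p + T s i k p * Gamma h hinv i j s p
          + T s i k p * T i j s p) := by
  have htr_pd : ∑ i, pd j (T i i k) p = 0 := by
    rw [← pd_fun_sum fun i => dT i i k]
    simp [htr, pd]
  have htr_contr (X : Fin 3 → ℝ) : ∑ i, ∑ s, X s * T i i s p = 0 := by
    rw [Finset.sum_comm]
    simp [← Finset.mul_sum, htr]
  have hcomm : ∑ i, ∑ s, T s j k p * Gamma h hinv i i s p
      = ∑ s, T s j k p * ∑ i, Gamma h hinv i i s p := by
    rw [Finset.sum_comm]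
    simp only [Finset.mul_sum]
  rw [Ricci_eq_sum_Riem hh, Ricci_eq_sum_Riem hh']
  simp only [Riem_of_Gamma_eventuallyEq_add hΓ dΓ dT, Finset.sum_add_distrib,
    Finset.sum_sub_distrib, htr_pd, htr_contr, hcomm]
  ring

/-- The connection matrix `(Γ^k_{ij} w^i)_{kj}` in the direction `w`, with row index `k`. It turns
the contractions of `Γ` with projections into matrix products. -/
noncomputable def connectionMatrix (h hinv : Fin 3 → Fin 3 → Pt → ℝ) (p : Pt) (w : Fin 3 → ℝ) :
    Matrix (Fin 3) (Fin 3) ℝ :=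
  .of fun k j => ∑ i, w i * Gamma h hinv k i j p

lemma Gamma_eq_connectionMatrix_single (k i j : Fin 3) :
    Gamma h hinv k i j p = connectionMatrix h hinv p (Pi.single i 1) k j := by
  simp [connectionMatrix, Pi.single_apply]

lemma Gamma_comm (hsymm : ∀ i j, h i j = h j i) (k i j : Fin 3) :
    Gamma h hinv k i j p = Gamma h hinv k j i p := by
  simp only [Gamma, hsymm i j, add_comm (pd i _ p)]

end Curvature

section OrthogonalSplitting

/-- `P` and `S` are the two complementary orthogonal projections of a decomposition of `ℝ³` into
orthogonal subspaces, where orthogonality refers to the Euclidean metric of the coordinates. -/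
structure IsOrthogonalSplitting (P S : Matrix (Fin 3) (Fin 3) ℝ) : Prop where
  add_eq_one : P + S = 1
  mul_eq_zero : P * S = 0
  left_isSymm : P.IsSymm

namespace IsOrthogonalSplitting

variable {P S : Matrix (Fin 3) (Fin 3) ℝ} {w : Fin 3 → ℝ}

lemma right_isSymm (hPS : IsOrthogonalSplitting P S) : S.IsSymm := by
  rw [eq_sub_of_add_eq' hPS.add_eq_one]
  exact isSymm_one.sub hPS.left_isSymm

lemma symm (hPS : IsOrthogonalSplitting P S) : IsOrthogonalSplitting S P where
  add_eq_one := by rw [add_comm, hPS.add_eq_one]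
  mul_eq_zero := by
    rw [← transpose_eq_zero, transpose_mul, hPS.left_isSymm.eq, hPS.right_isSymm.eq,
      hPS.mul_eq_zero]
  left_isSymm := hPS.right_isSymm

lemma mul_self_left (hPS : IsOrthogonalSplitting P S) : P * P = P := by
  simpa [mul_add, hPS.mul_eq_zero] using congr(P * $hPS.add_eq_one)

lemma mulVec_of_mulVec_eq_zero (hPS : IsOrthogonalSplitting P S) (hw : P *ᵥ w = 0) :
    S *ᵥ w = w := by
  simpa [add_mulVec, hw] using congr($hPS.add_eq_one *ᵥ w)

end IsOrthogonalSplitting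

variable {h hinv h' hinv' : Fin 3 → Fin 3 → Pt → ℝ} {p : Pt} {P S : Matrix (Fin 3) (Fin 3) ℝ}
  {u v : Pt → Fin 3 → ℝ}

lemma sum_Gamma_mul_projections (x y : Fin 3 → ℝ) (j k : Fin 3) :
    ∑ i, ∑ s, Gamma h hinv s i k p * (S j s * x i + P j s * y i)
      = (S * connectionMatrix h hinv p x + P * connectionMatrix h hinv p y) j k := by
  simp only [connectionMatrix, Matrix.add_apply, mul_apply, of_apply, Fin.sum_univ_three]
  ring

lemma sum_projections_mul_projections (hPS : IsOrthogonalSplitting P S) {x y : Fin 3 → ℝ}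
    (hx : S *ᵥ x = 0) (hy : P *ᵥ y = 0) (j k : Fin 3) :
    ∑ i, ∑ s, (S i k * x s + P i k * y s) * (S j s * x i + P j s * y i)
      = (vecMulVec x y + vecMulVec y x) j k := by
  calc _ = (S *ᵥ x) k * (S *ᵥ x) j + (S *ᵥ y) k * (P *ᵥ x) j + (P *ᵥ x) k * (S *ᵥ y) j
        + (P *ᵥ y) k * (P *ᵥ y) j := by
        simp only [hPS.left_isSymm.apply k, hPS.right_isSymm.apply k, mulVec, dotProduct,
          Fin.sum_univ_three]
        ring
    _ = _ := by
        rw [hx, hy, hPS.symm.mulVec_of_mulVec_eq_zero hx, hPS.mulVec_of_mulVec_eq_zero hy]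
        simp [vecMulVec_apply, mul_comm]

lemma exists_Ricci_of_Gamma_eventuallyEq_add_projections
    (hsymm : ∀ i j, h i j = h j i) (hPS : IsOrthogonalSplitting P S)
    (hh : tensorAt h p * tensorAt hinv p = 1) (hh' : tensorAt h' p * tensorAt hinv' p = 1)
    (hΓ : ∀ k i j, Gamma h' hinv' k i j =ᶠ[𝓝 p]
      Gamma h hinv k i j + (S i j • (u · k) + P i j • (v · k)))
    (dΓ : ∀ k i j, DifferentiableAt ℝ (Gamma h hinv k i j) p)
    (du : DifferentiableAt ℝ u p) (dv : DifferentiableAt ℝ v p)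
    (hu : ∀ q, S *ᵥ u q = 0) (hv : ∀ q, P *ᵥ v q = 0) :
    ∃ x y : ℝ, tensorAt (Ricci h' hinv') p = tensorAt (Ricci h hinv) p + x • P + y • S
      - (S * connectionMatrix h hinv p (u p) + P * connectionMatrix h hinv p (v p))
      - (S * connectionMatrix h hinv p (u p) + P * connectionMatrix h hinv p (v p))ᵀ
      - (vecMulVec (u p) (v p) + vecMulVec (v p) (u p)) := by
  rw [differentiableAt_pi] at du dv
  have dT (k i j : Fin 3) : DifferentiableAt ℝ (S i j • (u · k) + P i j • (v · k)) p :=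
    ((du k).const_smul _).add ((dv k).const_smul _)
  have hSu (q : Pt) (k : Fin 3) : ∑ i, S k i * u q i = 0 := congr_fun (hu q) k
  have hPv (q : Pt) (k : Fin 3) : ∑ i, P k i * v q i = 0 := congr_fun (hv q) k
  have htr (k : Fin 3) (q : Pt) : ∑ i, (S i k • (u · i) + P i k • (v · i)) q = 0 := by
    simp [Finset.sum_add_distrib, hPS.left_isSymm.apply k, hPS.right_isSymm.apply k, hSu, hPv]
  refine ⟨∑ i, pd i (v · i) p + ∑ s, v p s * ∑ i, Gamma h hinv i i s p,
    ∑ i, pd i (u · i) p + ∑ s, u p s * ∑ i, Gamma h hinv i i s p, ?_⟩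
  ext j k
  have hdiv : ∑ i, pd i (S j k • (u · i) + P j k • (v · i)) p
      = S j k * ∑ i, pd i (u · i) p + P j k * ∑ i, pd i (v · i) p := by
    simp only [pd_add ((du _).const_smul _) ((dv _).const_smul _), pd_const_smul,
      Finset.sum_add_distrib, Finset.mul_sum]
  have htrΓ (C : Fin 3 → ℝ) : ∑ s, (S j k * u p s + P j k * v p s) * C s
      = S j k * ∑ s, u p s * C s + P j k * ∑ s, v p s * C s := by
    simp only [add_mul, mul_assoc, Finset.sum_add_distrib, Finset.mul_sum]
  have hcross : ∑ i, ∑ s, (S i k * u p s + P i k * v p s) * Gamma h hinv i j s p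
      = (S * connectionMatrix h hinv p (u p) + P * connectionMatrix h hinv p (v p)) k j := by
    rw [← sum_Gamma_mul_projections, Finset.sum_comm]
    simp only [Gamma_comm hsymm _ j, hPS.left_isSymm.apply k, hPS.right_isSymm.apply k, mul_comm]
  have hRic := Ricci_of_Gamma_eventuallyEq_add_of_trace_eq_zero hh hh' hΓ dΓ dT htr j k
  simp only [hdiv, htrΓ, Pi.add_apply, Pi.smul_apply, smul_eq_mul, Finset.sum_add_distrib,
    sum_Gamma_mul_projections, hcross, sum_projections_mul_projections hPS (hu p) (hv p)] at hRic
  simp only [tensorAt, of_apply, Matrix.add_apply, Matrix.sub_apply, Matrix.smul_apply,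
    transpose_apply, smul_eq_mul, hRic]
  ring

/-- The metric `l P + n S`, of which `g` and `g̃` are both instances. -/
def splitMetric (P S : Matrix (Fin 3) (Fin 3) ℝ) (l n : Pt → ℝ) (i j : Fin 3) : Pt → ℝ :=
  P i j • l + S i j • n

variable {l n : Pt → ℝ} {a b : ℝ}

lemma splitMetric_swap (P S : Matrix (Fin 3) (Fin 3) ℝ) (l n : Pt → ℝ) :
    splitMetric P S l n = splitMetric S P n l :=
  funext₂ fun _ _ => add_comm _ _

lemma tensorAt_splitMetric : tensorAt (splitMetric P S l n) p = l p • P + n p • S := by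
  ext i j
  simp [tensorAt, splitMetric, mul_comm]

lemma splitMetric_comm (hPS : IsOrthogonalSplitting P S) (i j : Fin 3) :
    splitMetric P S l n i j = splitMetric P S l n j i := by
  rw [splitMetric, splitMetric, hPS.left_isSymm.apply, hPS.right_isSymm.apply]

lemma projection_eq_smul_mul_tensorAt_inv (hPS : IsOrthogonalSplitting P S)
    (hh : tensorAt (splitMetric P S l n) p * tensorAt hinv p = 1) :
    P = l p • (P * tensorAt hinv p) := by
  calc P = P * (tensorAt (splitMetric P S l n) p * tensorAt hinv p) := by
        rw [hh, mul_one]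
    _ = l p • (P * tensorAt hinv p) := by
        simp [tensorAt_splitMetric, ← mul_assoc, mul_add, hPS.mul_self_left, hPS.mul_eq_zero]

lemma ne_zero_of_splitMetric_mul_eq_one (hPS : IsOrthogonalSplitting P S) (hP : P ≠ 0)
    (hh : tensorAt (splitMetric P S l n) p * tensorAt hinv p = 1) : l p ≠ 0 := fun hl =>
  hP <| by simpa [hl] using projection_eq_smul_mul_tensorAt_inv hPS hh

lemma projection_mul_tensorAt_inv (hPS : IsOrthogonalSplitting P S)
    (hh : tensorAt (splitMetric P S l n) p * tensorAt hinv p = 1) :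
    P * tensorAt hinv p = (l p)⁻¹ • P := by
  have hP := projection_eq_smul_mul_tensorAt_inv hPS hh
  by_cases hl : l p = 0
  · rw [hl, zero_smul] at hP
    simp [hP]
  · nth_rw 2 [hP]
    rw [inv_smul_smul₀ hl]

lemma tensorAt_inv_splitMetric (hPS : IsOrthogonalSplitting P S)
    (hh : tensorAt (splitMetric P S l n) p * tensorAt hinv p = 1) :
    tensorAt hinv p = (l p)⁻¹ • P + (n p)⁻¹ • S := by
  rw [← projection_mul_tensorAt_inv hPS hh,
    ← projection_mul_tensorAt_inv hPS.symm (splitMetric_swap P S l n ▸ hh), ← add_mul,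
    hPS.add_eq_one, one_mul]

lemma connectionMatrix_splitMetric (hl : DifferentiableAt ℝ l p) (hn : DifferentiableAt ℝ n p)
    (w : Fin 3 → ℝ) :
    connectionMatrix (splitMetric P S l n) hinv p w = (1 / 2 : ℝ) • (tensorAt hinv p *
      ((w ⬝ᵥ grad l p) • P + vecMulVec (P *ᵥ w) (grad l p) - vecMulVec (grad l p) (w ᵥ* P)
        + ((w ⬝ᵥ grad n p) • S + vecMulVec (S *ᵥ w) (grad n p)
          - vecMulVec (grad n p) (w ᵥ* S)))) := by
  have hpd (i j k : Fin 3) :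
      pd k (splitMetric P S l n i j) p = P i j * grad l p k + S i j * grad n p k := by
    rw [splitMetric, pd_add (hl.const_smul _) (hn.const_smul _), pd_const_smul, pd_const_smul,
      grad, grad]
  ext k j
  simp only [connectionMatrix, Gamma, tensorAt, hpd, of_apply, Matrix.smul_apply, mul_apply,
    Matrix.add_apply, Matrix.sub_apply, smul_eq_mul, vecMulVec_apply, mulVec, vecMul, dotProduct,
    Fin.sum_univ_three]
  ring

lemma projection_mul_connectionMatrix (hPS : IsOrthogonalSplitting P S)
    (hh : tensorAt (splitMetric P S l n) p * tensorAt hinv p = 1)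
    (hl : DifferentiableAt ℝ l p) (hn : DifferentiableAt ℝ n p) (w : Fin 3 → ℝ) :
    P * connectionMatrix (splitMetric P S l n) hinv p w = (1 / 2 * (l p)⁻¹) •
      ((w ⬝ᵥ grad l p) • P + vecMulVec (P *ᵥ w) (grad l p) - vecMulVec (P *ᵥ grad l p) (P *ᵥ w)
        - vecMulVec (P *ᵥ grad n p) (S *ᵥ w)) := by
  rw [connectionMatrix_splitMetric hl hn, Matrix.mul_smul, ← Matrix.mul_assoc,
    projection_mul_tensorAt_inv hPS hh, ← mulVec_transpose P, ← mulVec_transpose S,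
    hPS.left_isSymm.eq, hPS.right_isSymm.eq, Matrix.smul_mul, smul_smul]
  simp [mul_add, mul_vecMulVec, hPS.mul_self_left, hPS.mul_eq_zero, sub_eq_add_neg,
    add_assoc]

/-- The vector field `f⁻¹ P ∇g`, zero where `f` vanishes. Multiples of `l⁻¹ P ∇n` and `n⁻¹ S ∇l`
make up the change of the Christoffel symbols of `l P + n S` under rescaling of `l` and `n`. -/
noncomputable def scaledGrad (P : Matrix (Fin 3) (Fin 3) ℝ) (f g : Pt → ℝ) (q : Pt) : Fin 3 → ℝ :=
  (f q)⁻¹ • P *ᵥ grad g q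

lemma projection_mul_connectionMatrix_of_mulVec_eq_zero (hPS : IsOrthogonalSplitting P S)
    (hh : tensorAt (splitMetric P S l n) p * tensorAt hinv p = 1)
    (hl : DifferentiableAt ℝ l p) (hn : DifferentiableAt ℝ n p) {w : Fin 3 → ℝ}
    (hw : P *ᵥ w = 0) :
    P * connectionMatrix (splitMetric P S l n) hinv p w =
      (1 / 2 * (l p)⁻¹ * (w ⬝ᵥ grad l p)) • P
        - (1 / 2 : ℝ) • vecMulVec (scaledGrad P l n p) w := by
  rw [projection_mul_connectionMatrix hPS hh hl hn, hw, hPS.mulVec_of_mulVec_eq_zero hw]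
  simp [scaledGrad, smul_vecMulVec, smul_sub, smul_smul]

lemma projection_mul_connectionMatrix_smul (hPS : IsOrthogonalSplitting P S) (ha : a ≠ 0)
    (hh : tensorAt (splitMetric P S l n) p * tensorAt hinv p = 1)
    (hh' : tensorAt (splitMetric P S (a • l) (b • n)) p * tensorAt hinv' p = 1)
    (hl : DifferentiableAt ℝ l p) (hn : DifferentiableAt ℝ n p) (w : Fin 3 → ℝ) :
    P * connectionMatrix (splitMetric P S (a • l) (b • n)) hinv' p w =
      P * connectionMatrix (splitMetric P S l n) hinv p w
        + vecMulVec (((1 - b / a) / 2) • scaledGrad P l n p) (S *ᵥ w) := by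
  rw [projection_mul_connectionMatrix hPS hh hl hn,
    projection_mul_connectionMatrix hPS hh' (hl.const_smul a) (hn.const_smul b)]
  simp only [grad_const_smul, scaledGrad, mulVec_smul, vecMulVec_smul, smul_vecMulVec,
    dotProduct_smul, Pi.smul_apply, smul_eq_mul, mul_inv]
  match_scalars <;> field_simp
  ring

lemma Gamma_splitMetric_smul (hPS : IsOrthogonalSplitting P S) (ha : a ≠ 0) (hb : b ≠ 0)
    (hh : tensorAt (splitMetric P S l n) p * tensorAt hinv p = 1)
    (hh' : tensorAt (splitMetric P S (a • l) (b • n)) p * tensorAt hinv' p = 1)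
    (hl : DifferentiableAt ℝ l p) (hn : DifferentiableAt ℝ n p) (k i j : Fin 3) :
    Gamma (splitMetric P S (a • l) (b • n)) hinv' k i j p =
      Gamma (splitMetric P S l n) hinv k i j p
        + (S i j * (((1 - b / a) / 2) • scaledGrad P l n p) k
          + P i j * (((1 - a / b) / 2) • scaledGrad S n l p) k) := by
  have hconn (w : Fin 3 → ℝ) :
      connectionMatrix (splitMetric P S (a • l) (b • n)) hinv' p w =
        connectionMatrix (splitMetric P S l n) hinv p w
          + (vecMulVec (((1 - b / a) / 2) • scaledGrad P l n p) (S *ᵥ w)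
            + vecMulVec (((1 - a / b) / 2) • scaledGrad S n l p) (P *ᵥ w)) := by
    have hP := projection_mul_connectionMatrix_smul hPS ha hh hh' hl hn w
    have hS := projection_mul_connectionMatrix_smul hPS.symm hb (splitMetric_swap P S _ _ ▸ hh)
      (splitMetric_swap P S _ _ ▸ hh') hn hl w
    rw [splitMetric_swap S P, splitMetric_swap S P] at hS
    calc _ = (P + S) * connectionMatrix (splitMetric P S (a • l) (b • n)) hinv' p w := by
          rw [hPS.add_eq_one, one_mul]
      _ = (P + S) * connectionMatrix (splitMetric P S l n) hinv p w + _ := by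
          rw [add_mul, add_mul, hP, hS, add_add_add_comm]
      _ = _ := by rw [hPS.add_eq_one, one_mul]
  rw [Gamma_eq_connectionMatrix_single, hconn, Gamma_eq_connectionMatrix_single]
  simp only [mulVec_single_one, Matrix.add_apply, vecMulVec_apply, col_apply,
    hPS.left_isSymm.apply, hPS.right_isSymm.apply]
  ring

lemma mulVec_scaledGrad_eq_zero (hPS : IsOrthogonalSplitting P S) (f g : Pt → ℝ) (q : Pt) :
    S *ᵥ scaledGrad P f g q = 0 := by
  simp [scaledGrad, mulVec_smul, hPS.symm.mul_eq_zero]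

lemma differentiableAt_scaledGrad (hl : DifferentiableAt ℝ l p) (hl₀ : l p ≠ 0)
    (hn : ContDiffAt ℝ 2 n p) : DifferentiableAt ℝ (scaledGrad P l n) p :=
  (hl.inv hl₀).smul ((mulVecLin P).toContinuousLinearMap.differentiableAt.comp p
    (differentiableAt_grad hn))

lemma differentiableAt_Gamma_splitMetric (hPS : IsOrthogonalSplitting P S)
    (hl : ContDiffAt ℝ 2 l p) (hn : ContDiffAt ℝ 2 n p) (hl₀ : l p ≠ 0) (hn₀ : n p ≠ 0)
    (hh : ∀ᶠ q in 𝓝 p, tensorAt (splitMetric P S l n) q * tensorAt hinv q = 1) (k i j : Fin 3) :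
    DifferentiableAt ℝ (Gamma (splitMetric P S l n) hinv k i j) p := by
  have dl := hl.differentiableAt two_ne_zero
  have dn := hn.differentiableAt two_ne_zero
  have dh (i j k : Fin 3) : DifferentiableAt ℝ (pd k (splitMetric P S l n i j)) p :=
    differentiableAt_pd ((contDiffAt_const.smul hl).add (contDiffAt_const.smul hn)) k
  have dhinv (k s : Fin 3) : DifferentiableAt ℝ (hinv k s) p := by
    have hinv_eq : hinv k s =ᶠ[𝓝 p] fun q => (l q)⁻¹ * P k s + (n q)⁻¹ * S k s := by
      filter_upwards [hh] with q hq
      simpa [tensorAt] using congr($(tensorAt_inv_splitMetric hPS hq) k s)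
    refine DifferentiableAt.congr_of_eventuallyEq ?_ hinv_eq
    fun_prop (disch := assumption)
  unfold Gamma
  fun_prop

lemma exists_projections_mul_connectionMatrix_add_transpose (hPS : IsOrthogonalSplitting P S)
    (hh : tensorAt (splitMetric P S l n) p * tensorAt hinv p = 1)
    (hl : DifferentiableAt ℝ l p) (hn : DifferentiableAt ℝ n p) (α β : ℝ) :
    ∃ x y : ℝ,
      S * connectionMatrix (splitMetric P S l n) hinv p (α • scaledGrad P l n p)
        + P * connectionMatrix (splitMetric P S l n) hinv p (β • scaledGrad S n l p)
        + (S * connectionMatrix (splitMetric P S l n) hinv p (α • scaledGrad P l n p)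
          + P * connectionMatrix (splitMetric P S l n) hinv p (β • scaledGrad S n l p))ᵀ =
      x • P + y • S - ((α + β) / 2) • (vecMulVec (scaledGrad P l n p) (scaledGrad S n l p)
        + vecMulVec (scaledGrad S n l p) (scaledGrad P l n p)) := by
  obtain ⟨c, hc⟩ : ∃ c : ℝ,
      P * connectionMatrix (splitMetric P S l n) hinv p (β • scaledGrad S n l p) =
        c • P - (1 / 2 : ℝ) • vecMulVec (scaledGrad P l n p) (β • scaledGrad S n l p) :=
    ⟨_, projection_mul_connectionMatrix_of_mulVec_eq_zero hPS hh hl hn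
      (by rw [mulVec_smul, mulVec_scaledGrad_eq_zero hPS.symm, smul_zero])⟩
  obtain ⟨d, hd⟩ : ∃ d : ℝ,
      S * connectionMatrix (splitMetric P S l n) hinv p (α • scaledGrad P l n p) =
        d • S - (1 / 2 : ℝ) • vecMulVec (scaledGrad S n l p) (α • scaledGrad P l n p) := by
    rw [splitMetric_swap] at hh ⊢
    exact ⟨_, projection_mul_connectionMatrix_of_mulVec_eq_zero hPS.symm hh hn hl
      (by rw [mulVec_smul, mulVec_scaledGrad_eq_zero hPS, smul_zero])⟩
  refine ⟨2 * c, 2 * d, ?_⟩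
  rw [hc, hd]
  simp only [transpose_add, transpose_sub, transpose_smul, transpose_vecMulVec,
    hPS.left_isSymm.eq, hPS.right_isSymm.eq, vecMulVec_smul]
  module

theorem exists_Ricci_splitMetric_smul_eq_add (hPS : IsOrthogonalSplitting P S)
    (ha : a ≠ 0) (hb : b ≠ 0)
    (hl : ContDiffAt ℝ 2 l p) (hn : ContDiffAt ℝ 2 n p) (hl₀ : l p ≠ 0) (hn₀ : n p ≠ 0)
    (hh : ∀ᶠ q in 𝓝 p, tensorAt (splitMetric P S l n) q * tensorAt hinv q = 1)
    (hh' : ∀ᶠ q in 𝓝 p, tensorAt (splitMetric P S (a • l) (b • n)) q * tensorAt hinv' q = 1) :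
    ∃ x y : ℝ, tensorAt (Ricci (splitMetric P S (a • l) (b • n)) hinv') p =
      tensorAt (Ricci (splitMetric P S l n) hinv) p + (x • P + y • S) := by
  have dl := hl.differentiableAt two_ne_zero
  have dn := hn.differentiableAt two_ne_zero
  obtain ⟨α, hα⟩ : ∃ α : ℝ, α = (1 - b / a) / 2 := ⟨_, rfl⟩
  obtain ⟨β, hβ⟩ : ∃ β : ℝ, β = (1 - a / b) / 2 := ⟨_, rfl⟩
  have hΓ (k i j : Fin 3) : Gamma (splitMetric P S (a • l) (b • n)) hinv' k i j =ᶠ[𝓝 p]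
      Gamma (splitMetric P S l n) hinv k i j
        + (S i j • ((α • scaledGrad P l n) · k) + P i j • ((β • scaledGrad S n l) · k)) := by
    filter_upwards [hh, hh', hl.eventually (by simp), hn.eventually (by simp)] with q hq hq' hlq hnq
    rw [hα, hβ]
    exact Gamma_splitMetric_smul hPS ha hb hq hq' (hlq.differentiableAt two_ne_zero)
      (hnq.differentiableAt two_ne_zero) k i j
  obtain ⟨x, y, hRic⟩ := exists_Ricci_of_Gamma_eventuallyEq_add_projections
    (splitMetric_comm hPS) hPS hh.self_of_nhds hh'.self_of_nhds hΓ
    (differentiableAt_Gamma_splitMetric hPS hl hn hl₀ hn₀ hh)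
    ((differentiableAt_scaledGrad dl hl₀ hn).const_smul α)
    ((differentiableAt_scaledGrad dn hn₀ hl).const_smul β)
    (fun q => by rw [Pi.smul_apply, mulVec_smul, mulVec_scaledGrad_eq_zero hPS, smul_zero])
    (fun q => by rw [Pi.smul_apply, mulVec_smul, mulVec_scaledGrad_eq_zero hPS.symm, smul_zero])
  obtain ⟨c, d, hM⟩ := exists_projections_mul_connectionMatrix_add_transpose hPS
    hh.self_of_nhds dl dn α β
  have hcancel : (α + β) / 2 = α * β := by
    rw [hα, hβ]
    field_simp
    ring
  refine ⟨x - c, y - d, ?_⟩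
  rw [hRic, sub_sub (_ + _ + _), Pi.smul_apply, Pi.smul_apply, hM, hcancel]
  simp only [vecMulVec_smul, smul_vecMulVec]
  module

lemma scal_of_Ricci_eq_add (hPS : IsOrthogonalSplitting P S)
    (hh' : tensorAt (splitMetric P S l n) p * tensorAt hinv' p = 1) {x y : ℝ}
    (hRic : tensorAt (Ricci h hinv) p = x • P + y • S) :
    scal h hinv hinv' p = x * (l p)⁻¹ * P.trace + y * (n p)⁻¹ * S.trace := by
  have hsymm : (tensorAt hinv' p)ᵀ = tensorAt hinv' p := by
    simp [tensorAt_inv_splitMetric hPS hh', hPS.left_isSymm.eq, hPS.right_isSymm.eq]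
  calc scal h hinv hinv' p = ((tensorAt hinv' p)ᵀ * tensorAt (Ricci h hinv) p).trace := by
        simp only [scal, trace, diag_apply, mul_apply, transpose_apply, tensorAt, of_apply]
        exact Finset.sum_comm
    _ = _ := by
        rw [hsymm, tensorAt_inv_splitMetric hPS hh', hRic]
        simp [add_mul, mul_add, hPS.mul_self_left, hPS.symm.mul_self_left, hPS.mul_eq_zero,
          hPS.symm.mul_eq_zero, mul_assoc]

end OrthogonalSplitting

section Circulant

/-- The Euclidean orthogonal projection of `ℝ³` onto the line spanned by `(1, 1, 1)`. -/
noncomputable def diagonalProj : Matrix (Fin 3) (Fin 3) ℝ := .of fun _ _ => 1 / 3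

lemma isOrthogonalSplitting_diagonalProj :
    IsOrthogonalSplitting (1 - diagonalProj) diagonalProj where
  add_eq_one := sub_add_cancel _ _
  mul_eq_zero := by
    rw [sub_mul, one_mul, sub_eq_zero]
    ext i j
    norm_num [diagonalProj, mul_apply]
  left_isSymm := isSymm_one.sub rfl

lemma trace_diagonalProj : diagonalProj.trace = 1 := by
  simp [diagonalProj, trace]

variable {A B : Pt → ℝ} {ginv gtinv : Fin 3 → Fin 3 → Pt → ℝ} {p : Pt}

lemma gm_eq_splitMetric (A B : Pt → ℝ) :
    gm A B = splitMetric (1 - diagonalProj) diagonalProj (A - B) (A + (2 : ℝ) • B) := by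
  funext i j p
  simp only [gm, splitMetric, diagonalProj, Matrix.sub_apply, one_apply, of_apply, Pi.add_apply,
    Pi.smul_apply, Pi.sub_apply, smul_eq_mul]
  split_ifs <;> ring

lemma gt_eq_splitMetric (A B : Pt → ℝ) :
    gt A B = splitMetric (1 - diagonalProj) diagonalProj
      ((-1 : ℝ) • (A - B)) ((2 : ℝ) • (A + (2 : ℝ) • B)) := by
  funext i j p
  fin_cases i <;> fin_cases j <;>
    simp [gt, gm, Qmat, splitMetric, diagonalProj, Fin.sum_univ_three] <;> ring

lemma smul_gm_add_smul_gt (a b : ℝ) :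
    a • tensorAt (gm A B) p + b • tensorAt (gt A B) p =
      ((a - b) * (A - B) p) • (1 - diagonalProj)
        + ((a + 2 * b) * (A + (2 : ℝ) • B) p) • diagonalProj := by
  rw [gm_eq_splitMetric, gt_eq_splitMetric, tensorAt_splitMetric, tensorAt_splitMetric]
  simp only [Pi.smul_apply (_ : ℝ) (A - B), Pi.smul_apply (_ : ℝ) (A + _), smul_eq_mul]
  module

lemma one_sub_diagonalProj_ne_zero : 1 - diagonalProj ≠ 0 := fun h => by
  simpa [diagonalProj] using congr($h 0 1)

lemma diagonalProj_ne_zero : diagonalProj ≠ 0 := fun h => by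
  simpa [diagonalProj] using congr($h 0 1)

lemma ne_zero_of_gm_mul_eq_one (hginv : tensorAt (gm A B) p * tensorAt ginv p = 1) :
    (A - B) p ≠ 0 ∧ (A + (2 : ℝ) • B) p ≠ 0 := by
  rw [gm_eq_splitMetric] at hginv
  refine ⟨ne_zero_of_splitMetric_mul_eq_one isOrthogonalSplitting_diagonalProj
    one_sub_diagonalProj_ne_zero hginv, ?_⟩
  rw [splitMetric_swap] at hginv
  exact ne_zero_of_splitMetric_mul_eq_one isOrthogonalSplitting_diagonalProj.symm
    diagonalProj_ne_zero hginv

lemma Ricci_gt_eq_of_eq_add (hginv : tensorAt (gm A B) p * tensorAt ginv p = 1)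
    (hgtinv : tensorAt (gt A B) p * tensorAt gtinv p = 1) {x y : ℝ}
    (hRic : tensorAt (Ricci (gt A B) gtinv) p = x • (1 - diagonalProj) + y • diagonalProj) :
    tensorAt (Ricci (gt A B) gtinv) p =
      (scal (gt A B) gtinv ginv p / 3) • tensorAt (gm A B) p
        + ((scal (gt A B) gtinv ginv p + 2 * scal (gt A B) gtinv gtinv p) / 6) •
          tensorAt (gt A B) p := by
  obtain ⟨hl₀, hn₀⟩ := ne_zero_of_gm_mul_eq_one hginv
  have hPS := isOrthogonalSplitting_diagonalProj
  rw [scal_of_Ricci_eq_add hPS (gm_eq_splitMetric A B ▸ hginv) hRic,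
    scal_of_Ricci_eq_add hPS (gt_eq_splitMetric A B ▸ hgtinv) hRic, hRic,
    smul_gm_add_smul_gt]
  simp only [Pi.smul_apply (_ : ℝ) (A - B), Pi.smul_apply (_ : ℝ) (A + _), trace_sub,
    trace_diagonalProj, trace_one, smul_eq_mul, Fintype.card_fin]
  generalize (A - B) p = l at *
  generalize (A + (2 : ℝ) • B) p = n at *
  match_scalars <;> field_simp <;> ring

lemma exists_Ricci_gt_eq_Ricci_gm_add {U : Set Pt} (hU : IsOpen U)
    (hA : ContDiffOn ℝ 2 A U) (hB : ContDiffOn ℝ 2 B U)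
    (hginv : ∀ q ∈ U, tensorAt (gm A B) q * tensorAt ginv q = 1)
    (hgtinv : ∀ q ∈ U, tensorAt (gt A B) q * tensorAt gtinv q = 1) (hp : p ∈ U) :
    ∃ x y : ℝ, tensorAt (Ricci (gt A B) gtinv) p =
      tensorAt (Ricci (gm A B) ginv) p + (x • (1 - diagonalProj) + y • diagonalProj) := by
  have hUp : U ∈ 𝓝 p := hU.mem_nhds hp
  obtain ⟨hl₀, hn₀⟩ := ne_zero_of_gm_mul_eq_one (hginv p hp)
  have cA : ContDiffAt ℝ 2 A p := hA.contDiffAt hUp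
  have cB : ContDiffAt ℝ 2 B p := hB.contDiffAt hUp
  rw [gm_eq_splitMetric] at hginv ⊢
  rw [gt_eq_splitMetric] at hgtinv ⊢
  exact exists_Ricci_splitMetric_smul_eq_add isOrthogonalSplitting_diagonalProj (by norm_num)
    two_ne_zero (cA.sub cB) (cA.add (contDiffAt_const.smul cB)) hl₀ hn₀
    (mem_of_superset hUp hginv) (mem_of_superset hUp hgtinv)

end Circulant

theorem almost_einstein_of_flat_g_general
    (U : Set Pt) (hU : IsOpen U) (A B : Pt → ℝ)
    (hA : ContDiffOn ℝ 2 A U) (hB : ContDiffOn ℝ 2 B U)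
    (ginv gtinv : Fin 3 → Fin 3 → Pt → ℝ)
    (hginv : ∀ p ∈ U, ∀ i j, (∑ s, gm A B i s p * ginv s j p) = if i = j then (1 : ℝ) else 0)
    (hgtinv : ∀ p ∈ U, ∀ i j, (∑ s, gt A B i s p * gtinv s j p) = if i = j then (1 : ℝ) else 0)
    (hRic : ∃ β γ : Pt → ℝ, ∀ p ∈ U, ∀ i j,
      Ricci (gm A B) ginv i j p = β p * gm A B i j p + γ p * gt A B i j p) :
    (∀ p ∈ U, ∀ i j,
      Ricci (gt A B) gtinv i j p =
        (scal (gt A B) gtinv ginv p / 3) * gm A B i j p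
        + ((scal (gt A B) gtinv ginv p + 2 * scal (gt A B) gtinv gtinv p) / 6) * gt A B i j p)
    ∧ ∃ β γ : Pt → ℝ, ∀ p ∈ U, ∀ i j,
        Ricci (gt A B) gtinv i j p = β p * gm A B i j p + γ p * gt A B i j p := by
  have hginv (p : Pt) (hp : p ∈ U) := tensorAt_mul_eq_one (hginv p hp)
  have hgtinv (p : Pt) (hp : p ∈ U) := tensorAt_mul_eq_one (hgtinv p hp)
  obtain ⟨β, γ, hRic⟩ := hRic
  suffices key : ∀ p ∈ U, _ from ⟨key, _, _, key⟩
  intro p hp i j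
  obtain ⟨x, y, hxy⟩ := exists_Ricci_gt_eq_Ricci_gm_add hU hA hB hginv hgtinv hp
  have hgm : tensorAt (Ricci (gm A B) ginv) p =
      β p • tensorAt (gm A B) p + γ p • tensorAt (gt A B) p := Matrix.ext (hRic p hp)
  rw [hgm, smul_gm_add_smul_gt, add_add_add_comm, ← add_smul, ← add_smul] at hxy
  exact congr($(Ricci_gt_eq_of_eq_add (hginv p hp) (hgtinv p hp) hxy) i j)

/-- if the curvature of `g` vanishes on `U`, then
`ρ̃_{ij} = (τ̃*/3) g_{ij} + ((τ̃* + 2τ̃)/6) g̃_{ij}`; in particular `(U, g̃, Q)` is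
almost Einstein: `ρ̃` is a functional linear combination of `g` and `g̃`. -/
theorem almost_einstein_of_flat_g
    (U : Set Pt) (hU : IsOpen U) (A B : Pt → ℝ)
    (hA : ContDiffOn ℝ (⊤ : ℕ∞) A U) (hB : ContDiffOn ℝ (⊤ : ℕ∞) B U)
    (hpos : ∀ p ∈ U, 0 < B p ∧ B p < A p)
    (ginv gtinv : Fin 3 → Fin 3 → Pt → ℝ)
    (hginv : ∀ p ∈ U, ∀ i j, (∑ s, gm A B i s p * ginv s j p) = if i = j then (1:ℝ) else 0)
    (hgtinv : ∀ p ∈ U, ∀ i j, (∑ s, gt A B i s p * gtinv s j p) = if i = j then (1:ℝ) else 0)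
    (hflat : ∀ p ∈ U, ∀ l i j k, Riem (gm A B) ginv l i j k p = 0) :
    (∀ p ∈ U, ∀ i j,
      Ricci (gt A B) gtinv i j p =
        (scal (gt A B) gtinv ginv p / 3) * gm A B i j p
        + ((scal (gt A B) gtinv ginv p + 2 * scal (gt A B) gtinv gtinv p) / 6) * gt A B i j p)
    ∧ ∃ β γ : Pt → ℝ, ∀ p ∈ U, ∀ i j,
        Ricci (gt A B) gtinv i j p = β p * gm A B i j p + γ p * gt A B i j p :=
  have two_le_top : (2 : WithTop ℕ∞) ≤ (⊤ : ℕ∞) := WithTop.coe_le_coe.2 (le_top : (2 : ℕ∞) ≤ ⊤)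
  almost_einstein_of_flat_g_general U hU A B (hA.of_le two_le_top) (hB.of_le two_le_top) ginv gtinv
    hginv hgtinv ⟨0, 0, fun p hp i j => by simp [Ricci, RiemLow, hflat p hp]⟩
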